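/- There exist a constant C > 0 and a real number x₀ such that for all x ≥ x₀, the number of integers n with 1 ≤ n ≤ x that are divisible by a pair of primes q₁, q₂ satisfying x^{1/(10 log log log x)} < q₁ ≤ x and q₁ · x^{−1/(log log log x)²} ≤ q₂ ≤ q₁ (with q₁ ≠ q₂, so that q₁q₂ ∣ n) is at most C·x/log log log x. -/

import Mathlib

open scoped Classical
open Filter Finset

/-!
Split the primes into dyadic blocks according to `k = ⌊log₂ p⌋`. Chebyshev's bound shows that the
reciprocals of the primes in the `k`-th block sum to `O(1 / k)`. If `q ≤ p ≤ q * y`, then the block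
of `q` is one of the `O(log y)` blocks ending at that of `p`, so the reciprocals `1 / (p * q)` of
the admissible pairs with `p` in the `k`-th block sum to `O(log y / k ^ 2)`. Summing over
`k ≥ ⌊log₂ z⌋`, at most `O(x * log y / log z)` integers up to `x` are divisible by a pair with
`z ≤ p`. For `y = x ^ (1 / L ^ 2)` and `z = x ^ (1 / (10 * L))`, the quotient `log y / log z` is
`10 / L`.
-/

/-- The `k`-th dyadic block of primes, those in `[2 ^ k, 2 ^ (k + 1))`; the sums over primes are
estimated block by block. -/
def dyadicPrimes (k : ℕ) : Finset ℕ :=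
  {p ∈ Ico (2 ^ k) (2 ^ (k + 1)) | p.Prime}

theorem mem_dyadicPrimes_iff_log_eq {k p : ℕ} :
    p ∈ dyadicPrimes k ↔ p.Prime ∧ Nat.log 2 p = k := by
  rw [dyadicPrimes, mem_filter, mem_Ico, and_comm]
  exact and_congr_right fun hp ↦ (Nat.log_eq_iff (Or.inr ⟨one_lt_two, hp.ne_zero⟩)).symm

theorem two_pow_le_of_mem_dyadicPrimes {k p : ℕ} (hp : p ∈ dyadicPrimes k) : 2 ^ k ≤ p :=
  (mem_Ico.mp (mem_filter.mp hp).1).1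

theorem mul_card_dyadicPrimes_le (k : ℕ) : k * #(dyadicPrimes k) ≤ 4 * 2 ^ k := by
  have hsub : dyadicPrimes k ⊆ {p ∈ range (2 ^ (k + 1) + 1) | p.Prime} :=
    filter_subset_filter _ fun p hp ↦ by simp only [mem_Ico, mem_range] at hp ⊢; omega
  have hpow : 2 ^ (k * #(dyadicPrimes k)) ≤ 2 ^ (4 * 2 ^ k) := calc
    2 ^ (k * #(dyadicPrimes k)) = (2 ^ k) ^ #(dyadicPrimes k) := pow_mul ..
    _ ≤ ∏ p ∈ dyadicPrimes k, p :=
      pow_card_le_prod _ _ _ fun _ ↦ two_pow_le_of_mem_dyadicPrimes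
    _ ≤ primorial (2 ^ (k + 1)) :=
      prod_le_prod_of_subset_of_one_le' hsub fun p hp _ ↦ (mem_filter.mp hp).2.one_le
    _ ≤ 4 ^ 2 ^ (k + 1) := primorial_le_four_pow _
    _ = 2 ^ (4 * 2 ^ k) := by rw [show 4 = 2 ^ 2 by norm_num, ← pow_mul]; ring_nf
  exact (Nat.pow_le_pow_iff_right one_lt_two).mp hpow

theorem sum_one_div_dyadicPrimes_le {k : ℕ} (hk : k ≠ 0) :
    ∑ p ∈ dyadicPrimes k, (1 : ℝ) / p ≤ 4 / k := by
  have hk_pos : (0 : ℝ) < k := by positivity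
  have hcard : (k : ℝ) * #(dyadicPrimes k) ≤ 4 * 2 ^ k := by
    exact_mod_cast mul_card_dyadicPrimes_le k
  calc
    ∑ p ∈ dyadicPrimes k, (1 : ℝ) / p ≤ ∑ _p ∈ dyadicPrimes k, (1 : ℝ) / 2 ^ k := by
      gcongr with p hp
      exact_mod_cast two_pow_le_of_mem_dyadicPrimes hp
    _ = #(dyadicPrimes k) / 2 ^ k := by rw [sum_const, nsmul_eq_mul, mul_one_div]
    _ ≤ 4 / k := by rw [div_le_div_iff₀ (by positivity) hk_pos]; linarith

theorem sum_Icc_sum_one_div_dyadicPrimes_le {k N : ℕ} (hk : k ≠ 0) (hN : 2 * N ≤ k) :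
    ∑ j ∈ Icc (k - N) k, ∑ q ∈ dyadicPrimes j, (1 : ℝ) / q ≤ 8 * (N + 1) / k := by
  have hblock : ∀ j ∈ Icc (k - N) k, ∑ q ∈ dyadicPrimes j, (1 : ℝ) / q ≤ 8 / k := fun j hj ↦ by
    have hkj : k ≤ 2 * j := by rw [mem_Icc] at hj; omega
    have hkj_real : (k : ℝ) ≤ 2 * j := by exact_mod_cast hkj
    have hj_ne : j ≠ 0 := by omega
    refine (sum_one_div_dyadicPrimes_le hj_ne).trans ?_
    rw [div_le_div_iff₀ (by positivity) (by positivity)]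
    linarith
  calc
    _ ≤ #(Icc (k - N) k) • (8 / k : ℝ) := sum_le_card_nsmul _ _ _ hblock
    _ = 8 * (N + 1) / k := by
      rw [Nat.card_Icc, show k + 1 - (k - N) = N + 1 by omega, nsmul_eq_mul]
      push_cast
      ring

theorem sum_Ico_inv_sq_le {K : ℕ} (hK : K ≠ 0) (M : ℕ) :
    ∑ k ∈ Ico K M, ((k : ℝ) ^ 2)⁻¹ ≤ 2 / K := by
  obtain ⟨K, rfl⟩ := Nat.exists_eq_succ_of_ne_zero hK
  simpa [← Ico_add_one_left_eq_Ioo] using sum_Ioo_inv_sq_le (α := ℝ) K M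

theorem sum_Ico_one_div_dyadicPrimes_pairs_le {K N : ℕ} (hK : K ≠ 0) (hN : 2 * N ≤ K) (M : ℕ) :
    ∑ k ∈ Ico K M, (∑ p ∈ dyadicPrimes k, (1 : ℝ) / p) *
      ∑ j ∈ Icc (k - N) k, ∑ q ∈ dyadicPrimes j, (1 : ℝ) / q ≤ 64 * (N + 1) / K := by
  calc
    _ ≤ ∑ k ∈ Ico K M, (4 / k : ℝ) * (8 * (N + 1) / k) := by
      gcongr with k hk
      all_goals have hKk := (mem_Ico.mp hk).1
      · exact sum_one_div_dyadicPrimes_le (by omega)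
      · exact sum_Icc_sum_one_div_dyadicPrimes_le (by omega) (by omega)
    _ = 32 * (N + 1) * ∑ k ∈ Ico K M, ((k : ℝ) ^ 2)⁻¹ := by
      rw [mul_sum]
      exact sum_congr rfl fun k _ ↦ by ring
    _ ≤ 32 * (N + 1) * (2 / K) := by gcongr; exact sum_Ico_inv_sq_le hK M
    _ = 64 * (N + 1) / K := by ring

theorem card_filter_exists_dvd_le {ι : Type*} (s : Finset ι) (d : ι → ℕ) (m : ℕ) :
    (#{n ∈ Icc 1 m | ∃ i ∈ s, d i ∣ n} : ℝ) ≤ m * ∑ i ∈ s, (1 : ℝ) / d i := by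
  have hsub : {n ∈ Icc 1 m | ∃ i ∈ s, d i ∣ n} ⊆ s.biUnion fun i ↦ {n ∈ Ioc 0 m | d i ∣ n} := by
    intro n hn
    obtain ⟨hnm, i, hi, hdvd⟩ := mem_filter.mp hn
    exact mem_biUnion.mpr ⟨i, hi, mem_filter.mpr ⟨hnm, hdvd⟩⟩
  have hcard : #{n ∈ Icc 1 m | ∃ i ∈ s, d i ∣ n} ≤ ∑ i ∈ s, m / d i := by
    simpa only [Nat.Ioc_filter_dvd_card_eq_div] using (card_le_card hsub).trans card_biUnion_le
  calc
    _ ≤ ∑ i ∈ s, ((m / d i : ℕ) : ℝ) := by exact_mod_cast hcard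
    _ ≤ ∑ i ∈ s, (m : ℝ) * (1 / d i) := by
      gcongr with i
      rw [mul_one_div]
      exact Nat.cast_div_le
    _ = m * ∑ i ∈ s, (1 : ℝ) / d i := (mul_sum ..).symm

theorem card_multiples_prime_pairs_log_close_le {K N : ℕ} (hK : K ≠ 0) (hN : 2 * N ≤ K) (m : ℕ) :
    (#{n ∈ Icc 1 m | ∃ p q : ℕ, p.Prime ∧ q.Prime ∧ K ≤ Nat.log 2 p ∧
        Nat.log 2 p ≤ Nat.log 2 q + N ∧ Nat.log 2 q ≤ Nat.log 2 p ∧ p * q ∣ n} : ℝ) ≤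
      m * (64 * (N + 1) / K) := by
  let pairs : Finset (Σ _ : ℕ, ℕ × Σ _ : ℕ, ℕ) := (Ico K (m + 1)).sigma fun k ↦
    dyadicPrimes k ×ˢ (Icc (k - N) k).sigma dyadicPrimes
  let pairProd : (Σ _ : ℕ, ℕ × Σ _ : ℕ, ℕ) → ℕ := fun i ↦ i.2.1 * i.2.2.2
  have hsum : ∑ i ∈ pairs, (1 : ℝ) / pairProd i =
      ∑ k ∈ Ico K (m + 1), (∑ p ∈ dyadicPrimes k, (1 : ℝ) / p) *
        ∑ j ∈ Icc (k - N) k, ∑ q ∈ dyadicPrimes j, (1 : ℝ) / q := by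
    simp only [pairs, pairProd, sum_sigma, sum_product, sum_mul]
    simp only [mul_sum, Nat.cast_mul, div_mul_div_comm, one_mul]
  calc
    _ ≤ (#{n ∈ Icc 1 m | ∃ i ∈ pairs, pairProd i ∣ n} : ℝ) := by
      refine Nat.cast_le.mpr <| card_le_card <| monotone_filter_right _ fun n hn ↦ ?_
      rintro ⟨p, q, hp, hq, hKp, hpq, hqp, hdvd⟩
      rw [mem_Icc] at hn
      have hpn : p ≤ n := Nat.le_of_dvd hn.1 ((Nat.dvd_mul_right p q).trans hdvd)
      have hlogp : Nat.log 2 p ≤ p := Nat.log_le_self 2 p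
      refine ⟨⟨Nat.log 2 p, p, Nat.log 2 q, q⟩, ?_, hdvd⟩
      simp only [pairs, mem_sigma, mem_product, mem_Ico, mem_Icc, mem_dyadicPrimes_iff_log_eq,
        and_true]
      exact ⟨⟨hKp, by omega⟩, hp, ⟨by omega, hqp⟩, hq⟩
    _ ≤ m * ∑ i ∈ pairs, (1 : ℝ) / pairProd i := card_filter_exists_dvd_le pairs pairProd m
    _ ≤ m * (64 * (N + 1) / K) := by
      rw [hsum]
      gcongr
      exact sum_Ico_one_div_dyadicPrimes_pairs_le hK hN _

theorem floor_logb_le_log {b : ℕ} {z : ℝ} {p : ℕ} (hb : 1 < b) (hz : 0 < z) (hzp : z ≤ p) :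
    ⌊Real.logb b z⌋₊ ≤ Nat.log b p := by
  rw [← Real.natFloor_logb_natCast]
  exact Nat.floor_mono (Real.logb_le_logb_of_le (by exact_mod_cast hb) hz hzp)

theorem log_le_log_add_ceil_logb {b : ℕ} {y : ℝ} {p q : ℕ} (hb : 1 < b) (hy : 0 < y) (hp : p ≠ 0)
    (hpq : (p : ℝ) ≤ q * y) : Nat.log b p ≤ Nat.log b q + ⌈Real.logb b y⌉₊ := by
  have hb_real : (1 : ℝ) < b := by exact_mod_cast hb
  have hq_pos : 0 < q := by
    refine Nat.pos_of_ne_zero fun hq ↦ hp ?_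
    rw [hq, Nat.cast_zero, zero_mul] at hpq
    exact_mod_cast hpq.antisymm p.cast_nonneg
  have hlogq : 0 ≤ Real.logb b q := Real.logb_nonneg hb_real (by exact_mod_cast hq_pos)
  rw [← Real.natFloor_logb_natCast, ← Real.natFloor_logb_natCast,
    ← Nat.floor_add_natCast hlogq]
  refine Nat.floor_mono ?_
  calc
    Real.logb b p ≤ Real.logb b (q * y) :=
      Real.logb_le_logb_of_le hb_real (by positivity) hpq
    _ = Real.logb b q + Real.logb b y := Real.logb_mul (by positivity) hy.ne'
    _ ≤ Real.logb b q + ⌈Real.logb b y⌉₊ := by gcongr; exact Nat.le_ceil _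

theorem card_multiples_prime_pairs_close_le {y z : ℝ} (hy : 2 ≤ y) (hyz : y ^ 5 ≤ z) (m : ℕ) :
    (#{n ∈ Icc 1 m | ∃ p q : ℕ, p.Prime ∧ q.Prime ∧ z ≤ p ∧ (p : ℝ) ≤ q * y ∧ q ≤ p ∧ p * q ∣ n} :
      ℝ) ≤ m * (240 * (Real.log y / Real.log z)) := by
  set a := Real.logb 2 y with ha
  set b := Real.logb 2 z with hb
  have hy_pos : 0 < y := by linarith
  have hz_pos : 0 < z := (by positivity : 0 < y ^ 5).trans_le hyz
  have one_le_a : 1 ≤ a := by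
    rwa [ha, Real.le_logb_iff_rpow_le one_lt_two hy_pos, Real.rpow_one]
  have hab : 5 * a ≤ b := by
    have := Real.logb_le_logb_of_le one_lt_two (by positivity) hyz
    rwa [Real.logb_pow, Nat.cast_ofNat] at this
  have hN : (⌈a⌉₊ : ℝ) < a + 1 := Nat.ceil_lt_add_one (by linarith)
  have hK : b < ⌊b⌋₊ + 1 := Nat.lt_floor_add_one b
  have h2NK : 2 * ⌈a⌉₊ ≤ ⌊b⌋₊ := by exact_mod_cast (by linarith : (2 * ⌈a⌉₊ : ℝ) ≤ ⌊b⌋₊)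
  have hK_ne : ⌊b⌋₊ ≠ 0 := (Nat.floor_pos.mpr (by linarith)).ne'
  calc
    _ ≤ (#{n ∈ Icc 1 m | ∃ p q : ℕ, p.Prime ∧ q.Prime ∧ ⌊b⌋₊ ≤ Nat.log 2 p ∧
        Nat.log 2 p ≤ Nat.log 2 q + ⌈a⌉₊ ∧ Nat.log 2 q ≤ Nat.log 2 p ∧ p * q ∣ n} : ℝ) := by
      refine Nat.cast_le.mpr <| card_le_card <| monotone_filter_right _ fun n _ ↦ ?_
      rintro ⟨p, q, hp, hq, hzp, hpq, hqp, hdvd⟩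
      exact ⟨p, q, hp, hq, floor_logb_le_log one_lt_two hz_pos hzp,
        log_le_log_add_ceil_logb one_lt_two hy_pos hp.ne_zero hpq,
        Nat.log_mono_right hqp, hdvd⟩
    _ ≤ m * (64 * (⌈a⌉₊ + 1) / ⌊b⌋₊) := card_multiples_prime_pairs_log_close_le hK_ne h2NK m
    _ ≤ m * (64 * (3 * a) / (4 / 5 * b)) := by gcongr <;> linarith
    _ = m * (240 * (a / b)) := by ring
    _ = m * (240 * (Real.log y / Real.log z)) := by
      rw [ha, hb, Real.logb, Real.logb, div_div_div_cancel_right₀ (by positivity)]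

theorem multiplicatively_close_prime_pairs_general {x L : ℝ} (hx : 0 < x) (hL : 50 ≤ L)
    (hLx : L ^ 2 ≤ Real.log x) :
    (#{n ∈ Icc 1 ⌊x⌋₊ | ∃ q₁ q₂ : ℕ, q₁.Prime ∧ q₂.Prime ∧ x ^ (1 / (10 * L)) < (q₁ : ℝ) ∧
      (q₁ : ℝ) * x ^ (-(1 / L ^ 2)) ≤ (q₂ : ℝ) ∧ q₂ ≤ q₁ ∧ q₁ * q₂ ∣ n} : ℝ) ≤ 2400 * x / L := by
  have hlogx : 0 < Real.log x := (by positivity : 0 < L ^ 2).trans_le hLx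
  have one_lt_x : 1 < x := (Real.log_pos_iff hx.le).mp hlogx
  have hy : 2 ≤ x ^ (1 / L ^ 2) := by
    rw [Real.le_rpow_iff_log_le two_pos hx, one_div_mul_eq_div, le_div_iff₀ (by positivity)]
    nlinarith [Real.log_two_lt_d9]
  have hyz : (x ^ (1 / L ^ 2)) ^ 5 ≤ x ^ (1 / (10 * L)) := by
    rw [← Real.rpow_mul_natCast hx.le]
    refine Real.rpow_le_rpow_of_exponent_le one_lt_x.le ?_
    rw [Nat.cast_ofNat, one_div_mul_eq_div, div_le_div_iff₀ (by positivity) (by positivity)]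
    nlinarith
  calc
    _ ≤ (#{n ∈ Icc 1 ⌊x⌋₊ | ∃ p q : ℕ, p.Prime ∧ q.Prime ∧ x ^ (1 / (10 * L)) ≤ p ∧
        (p : ℝ) ≤ q * x ^ (1 / L ^ 2) ∧ q ≤ p ∧ p * q ∣ n} : ℝ) := by
      refine Nat.cast_le.mpr <| card_le_card <| monotone_filter_right _ fun n _ ↦ ?_
      rintro ⟨p, q, hp, hq, hzp, hpq, hqp, hdvd⟩
      rw [Real.rpow_neg hx.le, mul_inv_le_iff₀ (by positivity)] at hpq
      exact ⟨p, q, hp, hq, hzp.le, hpq, hqp, hdvd⟩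
    _ ≤ ⌊x⌋₊ * (240 * (Real.log (x ^ (1 / L ^ 2)) / Real.log (x ^ (1 / (10 * L))))) :=
      card_multiples_prime_pairs_close_le hy hyz _
    _ = ⌊x⌋₊ * (2400 / L) := by
      rw [Real.log_rpow hx, Real.log_rpow hx]
      field_simp
      ring
    _ ≤ x * (2400 / L) := by gcongr; exact Nat.floor_le hx.le
    _ = 2400 * x / L := by ring

theorem eventually_log_pow_le_self (n : ℕ) : ∀ᶠ x in atTop, Real.log x ^ n ≤ x := by
  filter_upwards [(Real.isLittleO_pow_log_id_atTop (n := n)).eventuallyLE, eventually_ge_atTop 0]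
    with x hlog hx
  exact (le_abs_self _).trans (hlog.trans_eq (abs_of_nonneg hx))

theorem tendsto_log_log_log_atTop :
    Tendsto (fun x ↦ Real.log (Real.log (Real.log x))) atTop atTop :=
  Real.tendsto_log_atTop.comp (Real.tendsto_log_atTop.comp Real.tendsto_log_atTop)

theorem eventually_log_log_log_sq_le_log :
    ∀ᶠ x in atTop, Real.log (Real.log (Real.log x)) ^ 2 ≤ Real.log x := by
  have hloglog := Real.tendsto_log_atTop.comp Real.tendsto_log_atTop
  filter_upwards [hloglog.eventually (eventually_log_pow_le_self 2), eventually_ge_atTop 1]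
    with x hsq hx
  exact hsq.trans (Real.log_le_self (Real.log_nonneg hx))

theorem multiplicatively_close_prime_pairs :
    ∃ C : ℝ, 0 < C ∧ ∃ x₀ : ℝ, ∀ x : ℝ, x₀ ≤ x →
      (((Finset.Icc 1 ⌊x⌋₊).filter (fun n => ∃ q₁ q₂ : ℕ, q₁.Prime ∧ q₂.Prime ∧ q₁ ≠ q₂ ∧
          x ^ (1 / (10 * Real.log (Real.log (Real.log x)))) < (q₁ : ℝ) ∧ (q₁ : ℝ) ≤ x ∧
          (q₁ : ℝ) * x ^ (-(1 / (Real.log (Real.log (Real.log x))) ^ 2)) ≤ (q₂ : ℝ) ∧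
          q₂ ≤ q₁ ∧ q₁ * q₂ ∣ n)).card : ℝ)
        ≤ C * x / Real.log (Real.log (Real.log x)) := by
  obtain ⟨x₀, hx₀⟩ := eventually_atTop.mp <| (eventually_gt_atTop 0).and <|
    (tendsto_log_log_log_atTop.eventually_ge_atTop 50).and eventually_log_log_log_sq_le_log
  refine ⟨2400, by norm_num, x₀, fun x hx ↦ ?_⟩
  obtain ⟨hx_pos, hL, hLx⟩ := hx₀ x hx
  refine le_trans ?_ (multiplicatively_close_prime_pairs_general hx_pos hL hLx)
  refine Nat.cast_le.mpr <| card_le_card <| monotone_filter_right _ fun n _ ↦ ?_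
  rintro ⟨q₁, q₂, hq₁, hq₂, -, hlt, -, hclose⟩
  exact ⟨q₁, q₂, hq₁, hq₂, hlt, hclose⟩
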